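/- arXiv:1509.04608 — 7 statements merged into one kernel-verified Lean document; each statement's English description precedes it below -/
import Mathlib

section
/- Let V be a real vector space, Q a symmetric bilinear form on V, and Z : V → ℂ an ℝ-linear map such that Q(u,u) ≤ 0 for every u ∈ V with Z(u) = 0 (Q is negative semi-definite on the kernel of Z). If F, G ∈ V satisfy Q(F,F) ≥ 0 and Q(G,G) ≥ 0, and there exists a real number λ > 0 with Z(F) = λ·Z(G), then Q(F,G) ≥ 0. -/
/-- Numerical core of the discriminant-properties lemma for very weak stability
conditions: if `Q` is a symmetric bilinear form on a real vector space `V` that is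
negative semi-definite on the kernel of the `ℝ`-linear central charge `Z : V → ℂ`,
and `F, G ∈ V` satisfy `Q(F,F) ≥ 0`, `Q(G,G) ≥ 0` and `Z(F) = λ·Z(G)` for some
real `λ > 0`, then `Q(F,G) ≥ 0`. -/
theorem discriminant_pairing_nonneg
    (V : Type*) [AddCommGroup V] [Module ℝ V]
    (Q : V →ₗ[ℝ] V →ₗ[ℝ] ℝ) (hsymm : ∀ u v : V, Q u v = Q v u)
    (Z : V →ₗ[ℝ] ℂ) (hker : ∀ u : V, Z u = 0 → Q u u ≤ 0)
    (F G : V) (hF : 0 ≤ Q F F) (hG : 0 ≤ Q G G)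
    (hray : ∃ l : ℝ, 0 < l ∧ Z F = l • Z G) :
    0 ≤ Q F G := by
  obtain ⟨l, hl, hZ⟩ := hray
  -- `F - l • G` lies in the kernel of `Z`; expand `Q` on it.
  have h := hker (F - l • G) (by simp [hZ])
  simp only [map_sub, map_smul, LinearMap.sub_apply, LinearMap.smul_apply, smul_eq_mul,
    hsymm G F] at h
  have hprod : 0 ≤ l * Q F G := by
    nlinarith [mul_nonneg (mul_nonneg hl.le hl.le) hG]
  exact nonneg_of_mul_nonneg_right hprod hl
end

section
/- Let V be a real vector space, Q a symmetric bilinear form on V, and Z : V → ℂ an ℝ-linear map such that Q(u,u) ≤ 0 for every u ∈ V with Z(u) = 0. Suppose F, G ∈ V satisfy Q(F,F) ≥ 0 and Q(G,G) ≥ 0, there exists a real number λ > 0 with Z(F) = λ·Z(G), and E = F + G. Then 0 ≤ Q(F,F) + Q(G,G) ≤ Q(E,E). -/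
/-- Numerical core of the wall inequality `0 ≤ Q(F) + Q(G) ≤ Q(E)` for an actual wall
given by an exact sequence `0 → F → E → G → 0`: if `Q` is a symmetric bilinear form on
a real vector space `V` that is negative semi-definite on the kernel of the `ℝ`-linear
central charge `Z : V → ℂ`, `F, G ∈ V` satisfy `Q(F,F) ≥ 0`, `Q(G,G) ≥ 0`,
`Z(F) = λ·Z(G)` for some real `λ > 0`, and `E = F + G`, then
`0 ≤ Q(F,F) + Q(G,G) ≤ Q(E,E)`. -/
theorem wall_discriminant_inequality
    (V : Type*) [AddCommGroup V] [Module ℝ V]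
    (Q : V →ₗ[ℝ] V →ₗ[ℝ] ℝ) (hsymm : ∀ u v : V, Q u v = Q v u)
    (Z : V →ₗ[ℝ] ℂ) (hker : ∀ u : V, Z u = 0 → Q u u ≤ 0)
    (F G E : V) (hF : 0 ≤ Q F F) (hG : 0 ≤ Q G G)
    (hray : ∃ l : ℝ, 0 < l ∧ Z F = l • Z G)
    (hE : E = F + G) :
    0 ≤ Q F F + Q G G ∧ Q F F + Q G G ≤ Q E E := by
  obtain ⟨l, hl, hZ⟩ := hray
  subst hE
  -- `F - l • G` lies in `ker Z`, so `Q F F + l ^ 2 * Q G G ≤ 2 * l * Q F G`;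
  -- as `l > 0`, the cross term `Q F G` is nonnegative.
  have hu := hker (F - l • G) (by simp [hZ])
  simp only [map_sub, map_smul, LinearMap.sub_apply, LinearMap.smul_apply,
    smul_eq_mul, hsymm G F] at hu
  have hFG : 0 ≤ Q F G := by
    have hl2 : 0 ≤ l * (l * Q G G) := by positivity
    have h : 0 ≤ l * Q F G := by linarith
    exact nonneg_of_mul_nonneg_right h hl
  refine ⟨add_nonneg hF hG, ?_⟩
  simp only [map_add, LinearMap.add_apply, hsymm G F]
  linarith
end

section
/- Fix (R,C,D) ∈ ℝ³ and (r,c,d) ∈ ℝ³, and set x = Rc − Cr, y = 2(Dr − Rd), z = 2(Cd − Dc). Assume x ≠ 0 and y² − 4xz > 0, so that the numerical wall x(α² + β²) + yβ + z = 0 is a nonempty semicircle α² + (β + y/(2x))² = (y² − 4xz)/(4x²) with center on the β-axis. Let (α₀, β₀) be its top point, i.e. β₀ = −y/(2x) and α₀² = (y² − 4xz)/(4x²) with α₀ > 0. Then R·α₀² − R·β₀² + 2C·β₀ − 2D = 0; that is, the hyperbola {ν_{α,β}(R,C,D) = 0} passes through the top point of every semicircular numerical wall. -/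
/-- Part (3) of the Structure Theorem for Walls in Tilt Stability: the hyperbola
`{ν_{α,β}(R,C,D) = 0}`, i.e. `Rα² − Rβ² + 2Cβ − 2D = 0`, passes through the top point
`(α₀, β₀)` of every semicircular numerical wall `x(α² + β²) + yβ + z = 0`, where
`x = Rc − Cr`, `y = 2(Dr − Rd)`, `z = 2(Cd − Dc)`, `x ≠ 0`, `y² − 4xz > 0`,
`β₀ = −y/(2x)` and `α₀² = (y² − 4xz)/(4x²)` with `α₀ > 0`. -/
theorem hyperbola_through_top_point
    (R C D r c d x y z α₀ β₀ : ℝ)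
    (hx : x = R * c - C * r) (hy : y = 2 * (D * r - R * d))
    (hz : z = 2 * (C * d - D * c))
    (hxne : x ≠ 0) (hdisc : 0 < y ^ 2 - 4 * x * z)
    (hβ₀ : β₀ = -y / (2 * x))
    (hα₀sq : α₀ ^ 2 = (y ^ 2 - 4 * x * z) / (4 * x ^ 2)) (hα₀ : 0 < α₀) :
    R * α₀ ^ 2 - R * β₀ ^ 2 + 2 * C * β₀ - 2 * D = 0 := by
  -- The signed minors `x`, `y/2`, `z/2` of the matrix with rows `(R,C,D)`, `(r,c,d)` satisfy the
  -- relation obtained by expanding a `3 × 3` determinant whose row `(R,C,D)` is repeated.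
  have hdet : R * z + C * y + 2 * D * x = 0 := by
    rw [hx, hy, hz]; ring
  have hdiff : α₀ ^ 2 - β₀ ^ 2 = -z / x := by
    rw [hα₀sq, hβ₀]; field_simp; ring
  calc R * α₀ ^ 2 - R * β₀ ^ 2 + 2 * C * β₀ - 2 * D
      = R * (α₀ ^ 2 - β₀ ^ 2) + 2 * C * β₀ - 2 * D := by ring
    _ = -(R * z + C * y + 2 * D * x) / x := by
        rw [hdiff, hβ₀]; field_simp; ring
    _ = 0 := by rw [hdet]; simp
end

section
/- Fix (R,C,D) ∈ ℝ³ with R ≠ 0 and let (r,c,d) ∈ ℝ³ satisfy Rc − Cr = 0 and suppose (r,c,d) is not a real scalar multiple of (R,C,D). Then Dr − Rd ≠ 0, and for every α > 0 and β ∈ ℝ the cross-multiplied tilt-slope equality (d − βc + ((β² − α²)/2)r)·(C − βR) = (D − βC + ((β² − α²)/2)R)·(c − βr) holds if and only if β = C/R. -/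
/-- Part (4) of the Structure Theorem for Walls in Tilt Stability: fix `(R,C,D)` with
`R ≠ 0` and let `(r,c,d)` satisfy `Rc − Cr = 0` while not being a real scalar multiple
of `(R,C,D)`. Then `Dr − Rd ≠ 0`, and for every `α > 0`, `β ∈ ℝ` the cross-multiplied
tilt-slope equality holds if and only if `β = C/R`: there is exactly one vertical
numerical wall, given by `β = C/R`. -/
theorem unique_vertical_wall
    (R C D r c d : ℝ) (hR : R ≠ 0)
    (hx : R * c - C * r = 0)
    (hmult : ∀ t : ℝ, (r, c, d) ≠ (t * R, t * C, t * D)) :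
    D * r - R * d ≠ 0 ∧
    ∀ α β : ℝ, 0 < α →
      ((d - β * c + ((β ^ 2 - α ^ 2) / 2) * r) * (C - β * R) =
        (D - β * C + ((β ^ 2 - α ^ 2) / 2) * R) * (c - β * r) ↔
       β = C / R) := by
  -- With `t = r / R`, the hypothesis `hx` says `(r, c) = t • (R, C)`, so the two vectors
  -- can only differ in the third coordinate, and `d ≠ t * D`.
  obtain ⟨t, rfl⟩ : ∃ t, r = t * R := ⟨r / R, (div_mul_cancel₀ r hR).symm⟩
  obtain rfl : c = t * C := mul_left_cancel₀ hR (by linear_combination hx)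
  have hd : d - t * D ≠ 0 := fun h => hmult t (by rw [sub_eq_zero.mp h])
  refine ⟨fun h => mul_ne_zero hR hd (by linear_combination -h), fun α β _ => ?_⟩
  rw [eq_div_iff hR]
  constructor
  · intro h
    -- The difference of the two sides of the wall equation is `(d - t * D) * (C - β * R)`.
    have h' : (d - t * D) * (C - β * R) = 0 := by linear_combination h
    linear_combination -((mul_eq_zero.mp h').resolve_left hd)
  · intro h
    linear_combination -(d - t * D) * h
end

section
/- Let m, n, i, j, α, β be real numbers (in the application m, n ∈ ℤ with n < m and i, j positive integers). Define v = (v₀, v₁, v₂, v₃) = (i − j, im − jn, (im² − jn²)/2, (im³ − jn³)/6), the componentwise combination i·ch(O(m)) − j·ch(O(n)). Then (v₁² − 2v₀v₂)(α² + β²) + (6v₃v₀ − 2v₁v₂)β + 4v₂² − 6v₁v₃ = i·j·(m−n)²·( α² + (β − (m+n)/2)² − ((m−n)/2)² ). In particular, when i, j > 0 and m ≠ n, the vanishing locus of Q_{α,β}(v) in the (β,α)-plane with α > 0 is exactly the semicircle α² + (β − (m+n)/2)² = ((m−n)/2)². -/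
/-- For `v = i·ch(O(m)) − j·ch(O(n))` on `ℙ³`, i.e.
`v = (i − j, im − jn, (im² − jn²)/2, (im³ − jn³)/6)`, the BMT quadratic form satisfies
`(v₁² − 2v₀v₂)(α² + β²) + (6v₃v₀ − 2v₁v₂)β + 4v₂² − 6v₁v₃
  = i·j·(m−n)²·(α² + (β − (m+n)/2)² − ((m−n)/2)²)`.
In particular, for `i, j > 0` and `m ≠ n` its vanishing locus with `α > 0` is exactly
the semicircle `α² + (β − (m+n)/2)² = ((m−n)/2)²`. -/
theorem bmt_form_of_difference_of_line_bundles
    (m n i j α β v₀ v₁ v₂ v₃ : ℝ)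
    (h₀ : v₀ = i - j) (h₁ : v₁ = i * m - j * n)
    (h₂ : v₂ = (i * m ^ 2 - j * n ^ 2) / 2)
    (h₃ : v₃ = (i * m ^ 3 - j * n ^ 3) / 6) :
    ((v₁ ^ 2 - 2 * v₀ * v₂) * (α ^ 2 + β ^ 2) + (6 * v₃ * v₀ - 2 * v₁ * v₂) * β +
        4 * v₂ ^ 2 - 6 * v₁ * v₃ =
      i * j * (m - n) ^ 2 *
        (α ^ 2 + (β - (m + n) / 2) ^ 2 - ((m - n) / 2) ^ 2)) ∧
    (0 < i → 0 < j → m ≠ n → 0 < α →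
      ((v₁ ^ 2 - 2 * v₀ * v₂) * (α ^ 2 + β ^ 2) + (6 * v₃ * v₀ - 2 * v₁ * v₂) * β +
          4 * v₂ ^ 2 - 6 * v₁ * v₃ = 0 ↔
        α ^ 2 + (β - (m + n) / 2) ^ 2 = ((m - n) / 2) ^ 2)) := by
  have key : (v₁ ^ 2 - 2 * v₀ * v₂) * (α ^ 2 + β ^ 2) + (6 * v₃ * v₀ - 2 * v₁ * v₂) * β +
        4 * v₂ ^ 2 - 6 * v₁ * v₃ =
      i * j * (m - n) ^ 2 *
        (α ^ 2 + (β - (m + n) / 2) ^ 2 - ((m - n) / 2) ^ 2) := by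
    subst h₀ h₁ h₂ h₃
    ring
  refine ⟨key, fun hi hj hmn _ => ?_⟩
  have hc : i * j * (m - n) ^ 2 ≠ 0 :=
    mul_ne_zero (mul_ne_zero hi.ne' hj.ne') (pow_ne_zero 2 (sub_ne_zero.mpr hmn))
  rw [key, mul_eq_zero_iff_left hc, sub_eq_zero]
end

section
/- Let m, n ∈ ℝ with n < m, and set α₀ = (m−n)/2 and β₀ = (m+n)/2. Let (r,c,d) ∈ ℝ³ with r ≠ 0, d = c²/(2r), and c − β₀·r ≠ 0. If the cross-multiplied tilt-slope equality (d − β₀c + ((β₀² − α₀²)/2)r)·(m − β₀) = (m²/2 − β₀m + ((β₀² − α₀²)/2))·(c − β₀r) holds, then c = m·r or c = n·r. -/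
/-- At the top point `(α₀, β₀) = ((m−n)/2, (m+n)/2)` of the semicircular wall
`ν_{α,β}(O(m)) = ν_{α,β}(O(n))`, a vector `(r,c,d)` with `r ≠ 0`, `d = c²/(2r)` and
`c − β₀r ≠ 0` having the same tilt slope as `(1, m, m²/2) = ch_{≤2}(O(m))` must
satisfy `c = m·r` or `c = n·r`. -/
theorem stable_factor_slope_at_top_point
    (m n : ℝ) (hmn : n < m) (α₀ β₀ : ℝ)
    (hα₀ : α₀ = (m - n) / 2) (hβ₀ : β₀ = (m + n) / 2)
    (r c d : ℝ) (hr : r ≠ 0) (hd : d = c ^ 2 / (2 * r))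
    (hden : c - β₀ * r ≠ 0)
    (heq : (d - β₀ * c + ((β₀ ^ 2 - α₀ ^ 2) / 2) * r) * (m - β₀) =
      (m ^ 2 / 2 - β₀ * m + (β₀ ^ 2 - α₀ ^ 2) / 2) * (c - β₀ * r)) :
    c = m * r ∨ c = n * r := by
  subst hα₀ hβ₀
  have hd' : 2 * r * d = c ^ 2 := by rw [hd]; field_simp
  -- `O(m)` has slope zero at the top point, so the right side of `heq` vanishes identically,
  -- and `4 * r` times the left side factors as below.
  have hprod : (m - n) * ((c - m * r) * (c - n * r)) = 0 := by
    linear_combination 4 * r * heq - (m - n) * hd'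
  rcases mul_eq_zero.mp ((mul_eq_zero.mp hprod).resolve_left (sub_ne_zero.mpr hmn.ne')) with h | h
  · exact Or.inl (sub_eq_zero.mp h)
  · exact Or.inr (sub_eq_zero.mp h)
end

section
/- Let r ∈ ℤ and d ∈ ℝ. Suppose there exists α > 0 with d − (r/2)·α² = −(2 + α²)/4 (equality of the tilt slopes ν_{α,−2}(r,1,d) = ν_{α,−2}(1,2,−1)), and suppose 1 − 2rd ≥ 0 and 1 + 2(1−r)(1+d) ≥ 0. Then either r = 0 and d < −1/2, or r = 1 and d > −1/2. -/
/-!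
Equality of slopes gives `d = -1/2 + (2r - 1)α²/4`. Substituting this, the two Bogomolov
inequalities become `(1 + r) - r(2r - 1)α²/2 ≥ 0` and `(2 - r) - (r - 1)(2r - 1)α²/2 ≥ 0`.
Since `α² > 0`, the first fails for `r ≤ -1` and the second for `r ≥ 2`. For `r = 0` and `r = 1`
the formula for `d` gives the strict comparison with `-1/2`.
-/

/-- Numerical core of the lemma on walls for `ch(E) = (1,0,−3,5)` on the ray `β = −2`:
if a vector with twisted character `(r, 1, d)`, `r ∈ ℤ`, has the same tilt slope as
`(1, 2, −1) = ch^{−2}_{≤2}(I_C)` for some `α > 0`, i.e.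
`d − (r/2)α² = −(2 + α²)/4`, and both Bogomolov inequalities `1 − 2rd ≥ 0` and
`1 + 2(1−r)(1+d) ≥ 0` hold, then either `r = 0` and `d < −1/2`, or `r = 1` and
`d > −1/2`. -/
theorem wall_at_beta_minus_two
    (r : ℤ) (d : ℝ)
    (hslope : ∃ α : ℝ, 0 < α ∧ d - ((r : ℝ) / 2) * α ^ 2 = -(2 + α ^ 2) / 4)
    (hbog₁ : 1 - 2 * (r : ℝ) * d ≥ 0)
    (hbog₂ : 1 + 2 * (1 - (r : ℝ)) * (1 + d) ≥ 0) :
    (r = 0 ∧ d < -(1 / 2 : ℝ)) ∨ (r = 1 ∧ d > -(1 / 2 : ℝ)) := by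
  obtain ⟨α, hα, hs⟩ := hslope
  have hx : 0 < α ^ 2 := by positivity
  -- Equality of slopes determines `d`; the sign of `d + 1/2` is the sign of `2r - 1`.
  have hd : d = -(1 / 2) + (2 * (r : ℝ) - 1) * α ^ 2 / 4 := by linarith
  have hr : r ≤ -1 ∨ r = 0 ∨ r = 1 ∨ 2 ≤ r := by omega
  rcases hr with hr | rfl | rfl | hr
  · -- The first Bogomolov inequality reads `(1 + r) - r(2r - 1)α²/2 ≥ 0`.
    have h : (r : ℝ) ≤ -1 := by exact_mod_cast hr
    have hp : 0 < (r : ℝ) * (2 * r - 1) := mul_pos_of_neg_of_neg (by linarith) (by linarith)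
    have hq := mul_pos hp hx
    subst hd
    linarith
  · left
    norm_num at hd ⊢
    linarith
  · right
    norm_num at hd ⊢
    linarith
  · -- The second one reads `(2 - r) - (r - 1)(2r - 1)α²/2 ≥ 0`.
    have h : (2 : ℝ) ≤ r := by exact_mod_cast hr
    have hp : 0 < ((r : ℝ) - 1) * (2 * r - 1) := mul_pos (by linarith) (by linarith)
    have hq := mul_pos hp hx
    subst hd
    linarith
end
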